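/- For all real n ≥ 0 one has q_{n,1} = n + 2/3 − (2/3)·H_{n+1}, where q_{n,1} = (n+1)·E[V_n], i.e. the first normalized moment of the volume of the random convex chain; moreover q_{1,k} = 2/(k+2) for all k ≥ 0. -/

import Mathlib

open MeasureTheory

noncomputable section

/-- The triangle with vertices (0,0), (1,0), (0,1). -/
def T : Set (ℝ × ℝ) := convexHull ℝ {(0, 0), (1, 0), (0, 1)}

/-- The uniform distribution on `T`: twice Lebesgue measure restricted to `T`. -/
def μT : Measure (ℝ × ℝ) := (2 : ENNReal) • (volume.restrict T)

/-- Joint law of `n` independent uniform points in `T`. -/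
def P (n : ℕ) : Measure (Fin n → ℝ × ℝ) := Measure.pi fun _ => μT

/-- The random convex chain: convex hull of the points together with `(1,0)` and `(0,1)`. -/
def Tchain (n : ℕ) (ω : Fin n → ℝ × ℝ) : Set (ℝ × ℝ) :=
  convexHull ℝ (Set.range ω ∪ {(1, 0), (0, 1)})

/-- Normalized area `V_n = 2 vol(T_n)`. -/
def V (n : ℕ) (ω : Fin n → ℝ × ℝ) : ℝ := 2 * (volume (Tchain n ω)).toReal

/-- Number of vertices of `T_n` other than the two corners. -/
def N (n : ℕ) (ω : Fin n → ℝ × ℝ) : ℕ :=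
  (Set.extremePoints ℝ (Tchain n ω)).ncard - 2

/-- Normalized moments `q_{n,k} = C(n+k,k) E[V_n^k]`. -/
def q (n k : ℕ) : ℝ := ((n + k).choose k : ℝ) * ∫ ω, (V n ω) ^ k ∂ P n

/-- Probability generating function of `N_n`. -/
def G (n : ℕ) (t : ℝ) : ℝ := ∫ ω, t ^ (N n ω) ∂ P n

/-- Harmonic number. -/
def H (j : ℕ) : ℝ := ∑ i ∈ Finset.range j, 1 / ((i : ℝ) + 1)

/-- Generalized harmonic number of order 2. -/
def H2 (j : ℕ) : ℝ := ∑ i ∈ Finset.range j, 1 / ((i : ℝ) + 1) ^ 2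

/-- `c(k,ℓ)`: elementary symmetric polynomial `e_k` of `2/(j(j+1))`, `j = 1,…,ℓ`. -/
def c (k l : ℕ) : ℝ :=
  ∑ S ∈ (Finset.Icc 1 l).powersetCard k, ∏ j ∈ S, 2 / ((j : ℝ) * ((j : ℝ) + 1))

/-!
`1 - E[V_n]` is the probability that a fresh uniform point `p` lies outside the chain. Almost surely
this happens if and only if `p` has a right neighbour among the `n` points and the two corners: the
other end of the lower hull edge that leaves `p` to the right. The right neighbour is unique, so the
probability is the sum of the contributions of the individual vertices.

The corner `(0, 1)` never contributes, and `(1, 0)` contributes `1 / (n + 1)`. For a random point,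
describe the line through `p` and that point by its intercepts `a` and `b` with the axes: the
corners lie above it exactly when `a, b < 1`, the normalized area of the part of the triangle below
it is `a * b`, and the Jacobian of this parametrization is `a * b * r`, where `r` is the distance of
the two points as a fraction of the chord. So each random point contributes a multiple of
`∫∫ a * b * (1 - a * b) ^ (n - 1)`, which produces the harmonic number.
-/

/-! ### Orientation and right neighbours -/

/-- Twice the signed area of the triangle `p x z`; it is positive when `z` lies to the left of the
line directed from `p` to `x`. -/
def orient (p x z : ℝ × ℝ) : ℝ := (x.1 - p.1) * (z.2 - p.2) - (x.2 - p.2) * (z.1 - p.1)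

lemma orient_swap (p x z : ℝ × ℝ) : orient p z x = -orient p x z := by
  unfold orient; ring

lemma orient_self_left (p x : ℝ × ℝ) : orient p x p = 0 := by
  unfold orient; ring

lemma orient_self_right (p x : ℝ × ℝ) : orient p x x = 0 := by
  unfold orient; ring

lemma orient_add_smul (p x y z : ℝ × ℝ) {a b : ℝ} (hab : a + b = 1) :
    orient p x (a • y + b • z) = a * orient p x y + b * orient p x z := by
  obtain rfl : b = 1 - a := by linarith
  simp only [orient, Prod.fst_add, Prod.snd_add, Prod.smul_fst, Prod.smul_snd, smul_eq_mul]
  ring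

@[fun_prop]
lemma measurable_orient {α : Type*} [MeasurableSpace α] {p x z : α → ℝ × ℝ}
    (hp : Measurable p) (hx : Measurable x) (hz : Measurable z) :
    Measurable fun a => orient (p a) (x a) (z a) := by
  unfold orient
  fun_prop

lemma convex_setOf_orient_pos (p x : ℝ × ℝ) : Convex ℝ {z | 0 < orient p x z} := by
  intro y hy z hz a b ha hb hab
  rw [Set.mem_ofPred_eq, orient_add_smul p x y z hab]
  exact convex_Ioi (0 : ℝ) hy hz ha hb hab

lemma volume_setOf_orient_eq_zero {x z : ℝ × ℝ} (hxz : x ≠ z) :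
    volume {p | orient p x z = 0} = 0 := by
  let line : AffineSubspace ℝ (ℝ × ℝ) :=
    { carrier := {p | orient p x z = 0}
      smul_vsub_vadd_mem' := fun t p p' p'' hp hp' hp'' => by
        simp only [Set.mem_ofPred_eq, orient, vsub_eq_sub, vadd_eq_add, Prod.fst_add, Prod.snd_add,
          Prod.smul_fst, Prod.smul_snd, Prod.fst_sub, Prod.snd_sub, smul_eq_mul] at *
        linear_combination t * hp - t * hp' + hp'' }
  refine Measure.addHaar_affineSubspace volume line fun htop => hxz ?_
  have hperp : (x.1 + (z.2 - x.2), x.2 - (z.1 - x.1)) ∈ line := htop ▸ AffineSubspace.mem_top ..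
  have hnorm : (z.1 - x.1) ^ 2 + (z.2 - x.2) ^ 2 = 0 := by
    have : orient (x.1 + (z.2 - x.2), x.2 - (z.1 - x.1)) x z = 0 := hperp
    simp only [orient] at this
    linear_combination -this
  ext <;> nlinarith [sq_nonneg (z.1 - x.1), sq_nonneg (z.2 - x.2)]

lemma mem_of_orient_nonpos {C : Set (ℝ × ℝ)} (hC : Convex ℝ C) {p x z : ℝ × ℝ} {h : ℝ}
    (hx : x ∈ C) (hz : z ∈ C) (hpx : p.1 < x.1) (hzp : z.1 ≤ p.1) (hxz : orient p x z ≤ 0)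
    (hh : (p.1, h) ∈ C) (hph : p.2 ≤ h) : p ∈ C := by
  have hfibre : Convex ℝ {v | (p.1, v) ∈ C} := by
    intro v hv w hw a b ha hb hab
    simpa [← add_mul, hab] using hC hv hw ha hb hab
  let t := (p.1 - z.1) / (x.1 - z.1)
  have hden : 0 < x.1 - z.1 := by linarith
  have ht : t * (x.1 - z.1) = p.1 - z.1 := div_mul_cancel₀ _ hden.ne'
  have ht0 : 0 ≤ t := div_nonneg (sub_nonneg.2 hzp) hden.le
  have ht1 : t ≤ 1 := (div_le_one hden).2 (by linarith)
  let y := t • x + (1 - t) • z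
  have hy : y ∈ C := hC hx hz ht0 (sub_nonneg.2 ht1) (add_sub_cancel _ _)
  have hy1 : y.1 = p.1 := by
    simp only [y, Prod.fst_add, Prod.smul_fst, smul_eq_mul]
    linarith
  have hy2 : y.2 ≤ p.2 := by
    have hmul : (x.1 - p.1) * (y.2 - p.2) = (1 - t) * orient p x z := calc
      _ = orient p x y := by simp [orient, hy1]
      _ = t * orient p x x + (1 - t) * orient p x z :=
        orient_add_smul p x x z (add_sub_cancel _ _)
      _ = (1 - t) * orient p x z := by rw [orient_self_right, mul_zero, zero_add]
    by_contra! hlt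
    exact (mul_pos (sub_pos.2 hpx) (sub_pos.2 hlt)).not_ge
      (hmul.trans_le (mul_nonpos_of_nonneg_of_nonpos (sub_nonneg.2 ht1) hxz))
  exact hfibre.ordConnected.out (show (p.1, y.2) ∈ C from hy1 ▸ hy) hh ⟨hy2, hph⟩

/-- `z i` is the right neighbour of `p`: it lies strictly to the right of `p`, and every other point
of the family lies strictly above the line through `p` and `z i`. If such a point exists, the
segment from `p` to it is an edge of the lower boundary of the convex hull of `p` and the family. -/
def IsRightNeighbor {ι : Type*} (z : ι → ℝ × ℝ) (p : ℝ × ℝ) (i : ι) : Prop :=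
  p.1 < (z i).1 ∧ ∀ j, j ≠ i → 0 < orient p (z i) (z j)

namespace IsRightNeighbor

variable {ι : Type*} {z : ι → ℝ × ℝ} {p : ℝ × ℝ} {i j : ι}

lemma unique (hi : IsRightNeighbor z p i) (hj : IsRightNeighbor z p j) : i = j := by
  by_contra hij
  have hpos := hi.2 j (Ne.symm hij)
  rw [orient_swap] at hpos
  linarith [hj.2 i hij]

lemma notMem_convexHull (hi : IsRightNeighbor z p i) : p ∉ convexHull ℝ (Set.range z) := by
  intro hp
  set L := {w | 0 < orient p (z i) w}
  have hL : L.Nonempty :=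
    ⟨(p.1, p.2 + 1), by simpa [L, orient] using hi.1⟩
  have hsub : Set.range z ⊆ insert (z i) L := by
    rintro _ ⟨j, rfl⟩
    rcases eq_or_ne j i with rfl | hji
    · exact Set.mem_insert _ _
    · exact Or.inr (hi.2 j hji)
  have hp' := convexHull_mono hsub hp
  rw [convexHull_insert hL, (convex_setOf_orient_pos p (z i)).convexHull_eq, mem_convexJoin] at hp'
  obtain ⟨_, rfl, w, hw, a, b, ha, hb, hab, hcombo⟩ := hp'
  have hzero : b * orient p (z i) w = 0 := by
    have := orient_add_smul p (z i) (z i) w hab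
    rwa [hcombo, orient_self_left, orient_self_right, mul_zero, zero_add, eq_comm] at this
  obtain rfl : b = 0 := (mul_eq_zero.1 hzero).resolve_right (ne_of_gt hw)
  obtain rfl : a = 1 := by linarith
  exact hi.1.ne' (by simpa using congrArg Prod.fst hcombo)

end IsRightNeighbor

lemma exists_isRightNeighbor {ι : Type*} [Finite ι] {z : ι → ℝ × ℝ} {p : ℝ × ℝ} {h : ℝ}
    (hp : p ∉ convexHull ℝ (Set.range z)) (hright : ∃ i, p.1 < (z i).1)
    (hh : (p.1, h) ∈ convexHull ℝ (Set.range z)) (hph : p.2 ≤ h)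
    (hgen : ∀ i j, i ≠ j → orient p (z i) (z j) ≠ 0) : ∃ i, IsRightNeighbor z p i := by
  let slope (w : ℝ × ℝ) : ℝ := (w.2 - p.2) / (w.1 - p.1)
  obtain ⟨i, hi, hmin⟩ :=
    Set.exists_min_image {i | p.1 < (z i).1} (fun i => slope (z i)) (Set.toFinite _) hright
  have hz (i) : z i ∈ convexHull ℝ (Set.range z) := subset_convexHull ℝ _ ⟨i, rfl⟩
  refine ⟨i, hi, fun j hji => ?_⟩
  rcases lt_or_ge p.1 (z j).1 with hj | hj
  · have hslope := hmin j hj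
    have hnonneg : 0 ≤ orient p (z i) (z j) := by
      rw [div_le_div_iff₀ (sub_pos.2 hi) (sub_pos.2 hj)] at hslope
      unfold orient
      linarith
    exact hnonneg.lt_of_ne (hgen i j hji.symm).symm
  · by_contra hle
    exact hp (mem_of_orient_nonpos (convex_convexHull ℝ _) (hz i) (hz j) hi hj (not_lt.1 hle)
      hh hph)

lemma notMem_convexHull_iff_exists_isRightNeighbor {ι : Type*} [Finite ι] {z : ι → ℝ × ℝ}
    {p : ℝ × ℝ} {h : ℝ} (hright : ∃ i, p.1 < (z i).1) (hh : (p.1, h) ∈ convexHull ℝ (Set.range z))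
    (hph : p.2 ≤ h) (hgen : ∀ i j, i ≠ j → orient p (z i) (z j) ≠ 0) :
    p ∉ convexHull ℝ (Set.range z) ↔ ∃ i, IsRightNeighbor z p i :=
  ⟨fun hp => exists_isRightNeighbor hp hright hh hph hgen, fun ⟨_, hi⟩ => hi.notMem_convexHull⟩

lemma measurableSet_setOf_isRightNeighbor {α ι : Type*} [MeasurableSpace α] [Countable ι]
    {z : α → ι → ℝ × ℝ} {p : α → ℝ × ℝ} (hz : Measurable z) (hp : Measurable p) (i : ι) :
    MeasurableSet {a | IsRightNeighbor (z a) (p a) i} := by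
  have hinter : {a | IsRightNeighbor (z a) (p a) i} =
      {a | (p a).1 < (z a i).1} ∩ ⋂ j, ⋂ (_ : j ≠ i), {a | 0 < orient (p a) (z a i) (z a j)} := by
    ext; simp [IsRightNeighbor]
  rw [hinter]
  exact (measurableSet_lt (by fun_prop) (by fun_prop)).inter <| .iInter fun j => .iInter fun _ =>
    measurableSet_lt measurable_const (by fun_prop)

/-! ### The uniform distribution on the triangle -/

lemma isCompact_T : IsCompact T := (Set.toFinite _).isCompact_convexHull ℝ

lemma mem_T {z : ℝ × ℝ} : z ∈ T ↔ 0 ≤ z.1 ∧ 0 ≤ z.2 ∧ z.1 + z.2 ≤ 1 := by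
  constructor
  · have hconvex : Convex ℝ {z : ℝ × ℝ | 0 ≤ z.1 ∧ 0 ≤ z.2 ∧ z.1 + z.2 ≤ 1} :=
      (convex_halfSpace_ge (LinearMap.fst ℝ ℝ ℝ).isLinear 0).inter
        ((convex_halfSpace_ge (LinearMap.snd ℝ ℝ ℝ).isLinear 0).inter
          (convex_halfSpace_le (LinearMap.fst ℝ ℝ ℝ + LinearMap.snd ℝ ℝ ℝ).isLinear 1))
    refine fun hz => convexHull_min ?_ hconvex hz
    rintro _ (rfl | rfl | rfl) <;> norm_num
  · rintro ⟨h1, h2, h3⟩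
    have hsum := (convex_convexHull ℝ {((0 : ℝ), (0 : ℝ)), (1, 0), (0, 1)}).sum_mem
      (t := Finset.univ) (w := ![1 - (z.1 + z.2), z.1, z.2]) (z := ![(0, 0), (1, 0), (0, 1)])
      (by intro i _; fin_cases i <;> simp [*]) (by simp [Fin.sum_univ_three, add_assoc])
      (by intro i _; apply subset_convexHull; fin_cases i <;> simp)
    simpa [T, Fin.sum_univ_three] using hsum

lemma measurableSet_T : MeasurableSet T := isCompact_T.measurableSet

lemma setIntegral_T {E : Type*} [NormedAddCommGroup E] [NormedSpace ℝ E] {f : ℝ × ℝ → E}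
    (hf : IntegrableOn f T) :
    ∫ z in T, f z = ∫ x in (0 : ℝ)..1, ∫ y in (0 : ℝ)..(1 - x), f (x, y) := by
  have hfibre (x y : ℝ) : T.indicator f (x, y) =
      (Set.Icc 0 1).indicator (fun x => (Set.Icc 0 (1 - x)).indicator (fun y => f (x, y)) y) x := by
    classical
    simp only [Set.indicator_apply, mem_T, Set.mem_Icc]
    split_ifs <;> first | rfl | grind
  rw [← integral_indicator measurableSet_T, Measure.volume_eq_prod,
    integral_prod _ (hf.integrable_indicator measurableSet_T),
    intervalIntegral.integral_of_le zero_le_one, ← integral_Icc_eq_integral_Ioc,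
    ← integral_indicator measurableSet_Icc]
  refine integral_congr_ae (.of_forall fun x => ?_)
  simp only [hfibre]
  by_cases hx : x ∈ Set.Icc (0 : ℝ) 1
  · simp only [Set.indicator_of_mem hx]
    rw [integral_indicator measurableSet_Icc, integral_Icc_eq_integral_Ioc,
      intervalIntegral.integral_of_le (sub_nonneg.2 hx.2)]
  · simp only [Set.indicator_of_notMem hx, integral_zero]

lemma volume_real_T : volume.real T = 1 / 2 := by
  calc
    volume.real T = ∫ _ in T, (1 : ℝ) := by simp
    _ = ∫ x in (0 : ℝ)..1, ∫ _ in (0 : ℝ)..(1 - x), (1 : ℝ) :=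
      setIntegral_T (continuous_const.continuousOn.integrableOn_compact isCompact_T)
    _ = 1 / 2 := by
      simp only [intervalIntegral.integral_const, smul_eq_mul, mul_one, sub_zero]
      rw [intervalIntegral.integral_comp_sub_left (fun x => x)]
      norm_num

open Pointwise in
lemma convexHull_triple_eq_image_T (p x z : ℝ × ℝ) :
    convexHull ℝ {p, x, z} = p +ᵥ Matrix.toLin (.finTwoProd ℝ) (.finTwoProd ℝ)
      !![x.1 - p.1, z.1 - p.1; x.2 - p.2, z.2 - p.2] '' T := by
  have hadd (w : ℝ × ℝ) : p + (w.1 - p.1, w.2 - p.2) = w := add_sub_cancel p w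
  rw [T, LinearMap.image_convexHull, ← convexHull_vadd]
  simp [Set.image_insert_eq, ← Set.image_vadd, Matrix.toLin_finTwoProd_apply, hadd,
    Prod.mk_zero_zero]

lemma volume_real_convexHull_triple (p x z : ℝ × ℝ) :
    volume.real (convexHull ℝ {p, x, z}) = |orient p x z| / 2 := by
  rw [convexHull_triple_eq_image_T, measureReal_def, measure_vadd,
    Measure.addHaar_image_linearMap, LinearMap.det_toLin, Matrix.det_fin_two_of,
    ENNReal.toReal_mul, ENNReal.toReal_ofReal (abs_nonneg _), ← measureReal_def, volume_real_T,
    orient, mul_one_div]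
  congr 2
  ring

open Pointwise in
lemma mem_convexHull_rightTriangle {a b : ℝ} (ha : 0 < a) (hb : 0 < b) {z : ℝ × ℝ} :
    z ∈ convexHull ℝ {((0 : ℝ), (0 : ℝ)), (b, 0), (0, a)} ↔
      0 ≤ z.1 ∧ 0 ≤ z.2 ∧ a * z.1 + b * z.2 ≤ a * b := by
  rw [convexHull_triple_eq_image_T, Prod.mk_zero_zero, zero_vadd]
  simp only [Set.mem_image, Matrix.toLin_finTwoProd_apply]
  constructor
  · rintro ⟨w, hw, rfl⟩
    obtain ⟨h1, h2, h3⟩ := mem_T.1 hw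
    have hcombo := mul_le_mul_of_nonneg_left h3 (mul_pos ha hb).le
    suffices 0 ≤ b * w.1 ∧ 0 ≤ a * w.2 ∧ a * (b * w.1) + b * (a * w.2) ≤ a * b by simpa
    exact ⟨by positivity, by positivity, by linarith⟩
  · rintro ⟨h1, h2, h3⟩
    refine ⟨(z.1 / b, z.2 / a), mem_T.2 ⟨by positivity, by positivity, ?_⟩, ?_⟩
    · rw [div_add_div _ _ hb.ne' ha.ne', div_le_one (mul_pos hb ha)]
      linarith
    · ext <;> simp [mul_div_cancel₀, ha.ne', hb.ne']

lemma μT_real_apply {s : Set (ℝ × ℝ)} (hs : MeasurableSet s) :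
    μT.real s = 2 * volume.real (s ∩ T) := by
  rw [μT, measureReal_ennreal_smul_apply, measureReal_restrict_apply hs, ENNReal.toReal_ofNat]

instance : IsProbabilityMeasure μT := by
  rw [isProbabilityMeasure_iff_real, μT_real_apply .univ, Set.univ_inter, volume_real_T]
  norm_num

instance (n : ℕ) : IsProbabilityMeasure (P n) := by
  unfold P
  infer_instance

lemma ae_mem_T : ∀ᵐ z ∂μT, z ∈ T :=
  Measure.ae_smul_measure (ae_restrict_mem measurableSet_T) 2

lemma integral_μT {E : Type*} [NormedAddCommGroup E] [NormedSpace ℝ E] {f : ℝ × ℝ → E}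
    (hf : IntegrableOn f T) :
    ∫ z, f z ∂μT = (2 : ℝ) • ∫ x in (0 : ℝ)..1, ∫ y in (0 : ℝ)..(1 - x), f (x, y) := by
  rw [μT, integral_smul_measure, setIntegral_T hf]
  simp

lemma μT_real_setOf_lt {a b : ℝ} (ha : a ∈ Set.Ioc 0 1) (hb : b ∈ Set.Ioc 0 1) :
    μT.real {z | a * b < a * z.1 + b * z.2} = 1 - a * b := by
  have hcompl : {z | a * b < a * z.1 + b * z.2}ᶜ ∩ T =
      convexHull ℝ {((0 : ℝ), (0 : ℝ)), (b, 0), (0, a)} := by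
    ext z
    rw [mem_convexHull_rightTriangle ha.1 hb.1, Set.mem_inter_iff, Set.mem_compl_iff,
      Set.mem_ofPred_eq, not_lt, mem_T]
    refine ⟨fun h => ⟨h.2.1, h.2.2.1, h.1⟩, fun h => ⟨h.2.2, h.1, h.2.1, ?_⟩⟩
    have hfst := mul_nonneg (mul_nonneg ha.1.le h.1) (sub_nonneg.2 hb.2)
    have hsnd := mul_nonneg (mul_nonneg hb.1.le h.2.1) (sub_nonneg.2 ha.2)
    exact le_of_mul_le_mul_left (by linarith [h.2.2]) (mul_pos ha.1 hb.1)
  have hmeas : MeasurableSet {z : ℝ × ℝ | a * b < a * z.1 + b * z.2} := by measurability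
  have hbelow : μT.real {z | a * b < a * z.1 + b * z.2}ᶜ = a * b := by
    rw [μT_real_apply hmeas.compl, hcompl, volume_real_convexHull_triple, orient]
    simp only [sub_zero, mul_zero, abs_of_pos (mul_pos hb.1 ha.1)]
    ring
  linarith [probReal_compl_eq_one_sub (μ := μT) hmeas]

/-! ### Sections of product measures -/

section ProductMeasures

variable {α β : Type*} [MeasurableSpace α] [MeasurableSpace β] {μ : Measure α} {ν : Measure β}

lemma measureReal_prod_eq_integral [IsFiniteMeasure ν] {s : Set (α × β)}
    (hs : MeasurableSet s) : (μ.prod ν).real s = ∫ x, ν.real {y | (x, y) ∈ s} ∂μ := by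
  rw [measureReal_def, Measure.prod_apply hs, ← integral_toReal]
  · rfl
  · exact (measurable_measure_prodMk_left hs).aemeasurable
  · exact .of_forall fun x => measure_lt_top ν _

lemma measureReal_prod_eq_integral_symm [IsFiniteMeasure μ] [SFinite ν] {s : Set (α × β)}
    (hs : MeasurableSet s) : (μ.prod ν).real s = ∫ y, μ.real {x | (x, y) ∈ s} ∂ν := by
  rw [measureReal_def, Measure.prod_apply_symm hs, ← integral_toReal]
  · rfl
  · exact (measurable_measure_prodMk_right hs).aemeasurable
  · exact .of_forall fun y => measure_lt_top μ _

lemma measurableSet_setOf_forall_mem {ι : Type*} [Countable ι] {C : Set α} {S : Set (α × β)}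
    (hC : MeasurableSet C) (hS : MeasurableSet S) :
    MeasurableSet {q : α × (ι → β) | q.1 ∈ C ∧ ∀ j, (q.1, q.2 j) ∈ S} := by
  have hinter : {q : α × (ι → β) | q.1 ∈ C ∧ ∀ j, (q.1, q.2 j) ∈ S} =
      Prod.fst ⁻¹' C ∩ ⋂ j, (fun q : α × (ι → β) => (q.1, q.2 j)) ⁻¹' S := by
    ext; simp
  rw [hinter]
  exact (measurable_fst hC).inter (.iInter fun j => hS.preimage (by fun_prop))

lemma measureReal_prod_pi_setOf_forall [IsFiniteMeasure ν] {ι : Type*} [Fintype ι]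
    {C : Set α} {S : Set (α × β)} (hC : MeasurableSet C) (hS : MeasurableSet S) :
    (μ.prod (Measure.pi fun _ : ι => ν)).real {q | q.1 ∈ C ∧ ∀ j, (q.1, q.2 j) ∈ S} =
      ∫ x in C, ν.real {y | (x, y) ∈ S} ^ Fintype.card ι ∂μ := by
  rw [measureReal_prod_eq_integral (measurableSet_setOf_forall_mem hC hS), ← integral_indicator hC]
  congr 1 with x
  by_cases hx : x ∈ C
  · have hsection : {ω : ι → β | (x, ω) ∈ {q : α × (ι → β) | q.1 ∈ C ∧ ∀ j, (q.1, q.2 j) ∈ S}} =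
        Set.univ.pi fun _ => {y | (x, y) ∈ S} := by
      ext; simp [hx]
    rw [hsection, Set.indicator_of_mem hx, measureReal_def, Measure.pi_pi]
    simp [measureReal_def]
  · simp [hx]

lemma measurePreserving_prod_pi_removeNth [SFinite μ] [SigmaFinite ν] {n : ℕ} (i : Fin (n + 1)) :
    MeasurePreserving (fun q : α × (Fin (n + 1) → β) => ((q.1, q.2 i), i.removeNth q.2))
      (μ.prod (Measure.pi fun _ => ν)) ((μ.prod ν).prod (Measure.pi fun _ => ν)) :=
  (measurePreserving_prodAssoc μ ν _).symm.comp
    ((MeasurePreserving.id μ).prod (measurePreserving_piFinSuccAbove (fun _ => ν) i))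

lemma measureReal_prod_pi_setOf_forall_ne [SFinite μ] [IsFiniteMeasure ν] {n : ℕ} (i : Fin (n + 1))
    {C : Set (α × β)} {S : Set ((α × β) × β)} (hC : MeasurableSet C) (hS : MeasurableSet S) :
    (μ.prod (Measure.pi fun _ => ν)).real
        {q | (q.1, q.2 i) ∈ C ∧ ∀ j, j ≠ i → ((q.1, q.2 i), q.2 j) ∈ S} =
      ∫ x in C, ν.real {y | (x, y) ∈ S} ^ n ∂(μ.prod ν) := by
  have hpreimage : {q : α × (Fin (n + 1) → β) | (q.1, q.2 i) ∈ C ∧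
      ∀ j, j ≠ i → ((q.1, q.2 i), q.2 j) ∈ S} =
      (fun q => ((q.1, q.2 i), i.removeNth q.2)) ⁻¹'
        {q : (α × β) × (Fin n → β) | q.1 ∈ C ∧ ∀ j, (q.1, q.2 j) ∈ S} := by
    ext q
    simp [Fin.forall_iff_succAbove i, Fin.removeNth]
  rw [hpreimage, (measurePreserving_prod_pi_removeNth i).measureReal_preimage
    (measurableSet_setOf_forall_mem hC hS).nullMeasurableSet,
    measureReal_prod_pi_setOf_forall hC hS, Fintype.card_fin]

lemma measurePreserving_eval_prodMk {ι : Type*} [Fintype ι] {γ : ι → Type*}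
    [∀ i, MeasurableSpace (γ i)] (μ : ∀ i, Measure (γ i)) [∀ i, IsProbabilityMeasure (μ i)]
    {i j : ι} (hij : i ≠ j) :
    MeasurePreserving (fun ω : ∀ i, γ i => (ω i, ω j)) (Measure.pi μ) ((μ i).prod (μ j)) := by
  have hindep := (ProbabilityTheory.iIndepFun_pi (μ := μ) (X := fun _ => id)
    fun _ => aemeasurable_id).indepFun hij
  refine ⟨by fun_prop, ?_⟩
  rw [← (measurePreserving_eval μ i).map_eq, ← (measurePreserving_eval μ j).map_eq]
  exact hindep.map_prod_eq_prod_map_map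
    (measurable_pi_apply i).aemeasurable (measurable_pi_apply j).aemeasurable

lemma ae_pi_injective [MeasurableEq α] [IsProbabilityMeasure μ] [NullSingletonClass μ]
    {ι : Type*} [Fintype ι] :
    ∀ᵐ ω ∂(Measure.pi fun _ : ι => μ), Function.Injective ω := by
  have hdiag : ∀ᵐ x ∂(μ.prod μ), x.1 ≠ x.2 := by
    refine (Measure.ae_prod_iff_ae_ae measurableSet_diagonal.compl).2 (.of_forall fun x => ?_)
    filter_upwards [compl_mem_ae_iff.2 (measure_singleton x)] with y hy using Ne.symm hy
  have hne : ∀ᵐ ω ∂(Measure.pi fun _ : ι => μ), ∀ i j, i ≠ j → ω i ≠ ω j := by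
    simp only [ae_all_iff, Filter.eventually_imp_distrib_left]
    exact fun i j hij =>
      (measurePreserving_eval_prodMk (fun _ : ι => μ) hij).quasiMeasurePreserving.ae hdiag
  filter_upwards [hne] with ω hω i j
  exact not_imp_not.1 (hω i j)

end ProductMeasures

/-! ### Missing the chain -/

/-- The points whose convex hull is the convex chain `Tchain n ω`: the random points, indexed by
`Sum.inl`, and the corners `(1, 0)` and `(0, 1)`, indexed by `Sum.inr 0` and `Sum.inr 1`. -/
def vertices {n : ℕ} (ω : Fin n → ℝ × ℝ) : Fin n ⊕ Fin 2 → ℝ × ℝ :=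
  Sum.elim ω ![(1, 0), (0, 1)]

lemma measurable_vertices {n : ℕ} :
    Measurable (vertices : (Fin n → ℝ × ℝ) → Fin n ⊕ Fin 2 → ℝ × ℝ) := by
  refine measurable_pi_iff.2 fun i => ?_
  cases i with
  | inl i => exact measurable_pi_apply i
  | inr i => exact measurable_const

lemma Tchain_eq_convexHull_range_vertices {n : ℕ} (ω : Fin n → ℝ × ℝ) :
    Tchain n ω = convexHull ℝ (Set.range (vertices ω)) := by
  simp [Tchain, vertices, Set.Sum.elim_range, Set.union_comm]

lemma μT_absolutelyContinuous : μT ≪ volume :=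
  (Measure.absolutelyContinuous_of_le Measure.restrict_le_self).smul_left 2

instance : NullSingletonClass μT :=
  ⟨fun z => μT_absolutelyContinuous (measure_singleton z)⟩

lemma ae_vertices_injective (n : ℕ) : ∀ᵐ ω ∂P n, Function.Injective (vertices ω) := by
  have hcorner (i : Fin n) (k : Fin 2) :
      ∀ᵐ ω ∂P n, ω i ≠ (![(1, 0), (0, 1)] : Fin 2 → ℝ × ℝ) k :=
    Measure.ae_eval_ne (fun _ => μT) i _
  filter_upwards [ae_pi_injective (μ := μT), ae_all_iff.2 fun i => ae_all_iff.2 (hcorner i)]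
    with ω hω hne
  refine hω.sumElim (fun k l => ?_) hne
  fin_cases k <;> fin_cases l <;> simp

lemma ae_forall_orient_ne_zero {ι : Type*} [Countable ι] {z : ι → ℝ × ℝ}
    (hz : Function.Injective z) : ∀ᵐ p ∂μT, ∀ i j, i ≠ j → orient p (z i) (z j) ≠ 0 := by
  simp only [ae_all_iff, Filter.eventually_imp_distrib_left]
  exact fun i j hij => μT_absolutelyContinuous.ae_le <|
    compl_mem_ae_iff.2 (volume_setOf_orient_eq_zero (hz.ne hij))

lemma orient_corners (p : ℝ × ℝ) : orient p (1, 0) (0, 1) = 1 - p.1 - p.2 := by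
  unfold orient; ring

lemma ae_mem_interior_T : ∀ᵐ p ∂μT, 0 < p.1 ∧ 0 < p.2 ∧ p.1 + p.2 < 1 := by
  have hinj : Function.Injective (![(0, 0), (1, 0), (0, 1)] : Fin 3 → ℝ × ℝ) := by
    intro i j
    fin_cases i <;> fin_cases j <;> simp
  filter_upwards [ae_mem_T, ae_forall_orient_ne_zero hinj] with p hp hgen
  obtain ⟨h1, h2, h3⟩ := mem_T.1 hp
  have hbottom : orient p (0, 0) (1, 0) = p.2 := by unfold orient; ring
  have hleft : orient p (0, 0) (0, 1) = -p.1 := by unfold orient; ring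
  have hne2 : p.2 ≠ 0 := hbottom ▸ hgen 0 1 (by decide)
  have hne1 : -p.1 ≠ 0 := hleft ▸ hgen 0 2 (by decide)
  have hne3 : 1 - p.1 - p.2 ≠ 0 := orient_corners p ▸ hgen 1 2 (by decide)
  exact ⟨h1.lt_of_ne' (neg_ne_zero.1 hne1), h2.lt_of_ne' hne2,
    h3.lt_of_ne fun h => hne3 (by linarith)⟩

lemma notMem_Tchain_iff_exists_isRightNeighbor {n : ℕ} {ω : Fin n → ℝ × ℝ} {p : ℝ × ℝ}
    (hp : p ∈ T) (hp1 : p.1 < 1)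
    (hgen : ∀ i j, i ≠ j → orient p (vertices ω i) (vertices ω j) ≠ 0) :
    p ∉ Tchain n ω ↔ ∃ i, IsRightNeighbor (vertices ω) p i := by
  obtain ⟨h1, -, h3⟩ := mem_T.1 hp
  rw [Tchain_eq_convexHull_range_vertices]
  have htop : (p.1, 1 - p.1) ∈ convexHull ℝ (Set.range (vertices ω)) := by
    refine segment_subset_convexHull (Set.mem_range_self (.inr 0)) (Set.mem_range_self (.inr 1))
      ⟨p.1, 1 - p.1, h1, by linarith, by ring, ?_⟩
    simp [vertices]
  exact notMem_convexHull_iff_exists_isRightNeighbor ⟨.inr 0, hp1⟩ htop (by linarith) hgen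

lemma measurableSet_Tchain {n : ℕ} (ω : Fin n → ℝ × ℝ) : MeasurableSet (Tchain n ω) := by
  rw [Tchain_eq_convexHull_range_vertices]
  exact ((Set.finite_range _).isCompact_convexHull ℝ).isClosed.measurableSet

lemma Tchain_subset_T {n : ℕ} {ω : Fin n → ℝ × ℝ} (hω : ∀ i, ω i ∈ T) : Tchain n ω ⊆ T := by
  refine convexHull_min (Set.union_subset (Set.range_subset_iff.2 hω) ?_) (convex_convexHull ℝ _)
  rintro _ (rfl | rfl) <;> simp [mem_T]

lemma ae_forall_mem_T (n : ℕ) : ∀ᵐ ω ∂P n, ∀ i, ω i ∈ T :=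
  ae_all_iff.2 fun i => (measurePreserving_eval (fun _ => μT) i).quasiMeasurePreserving.ae ae_mem_T

lemma ae_V_eq (n : ℕ) :
    ∀ᵐ ω ∂P n, V n ω = μT.real {p | ¬∃ i, IsRightNeighbor (vertices ω) p i} := by
  filter_upwards [ae_forall_mem_T n, ae_vertices_injective n] with ω hT hinj
  have hV : V n ω = μT.real (Tchain n ω) := by
    rw [μT_real_apply (measurableSet_Tchain ω), Set.inter_eq_left.2 (Tchain_subset_T hT)]
    rfl
  rw [hV]
  refine measureReal_congr ?_
  filter_upwards [ae_mem_interior_T, ae_forall_orient_ne_zero hinj] with p hp hgen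
  obtain ⟨h1, h2, h3⟩ := hp
  have hpT : p ∈ T := mem_T.2 ⟨h1.le, h2.le, h3.le⟩
  exact propext (not_iff_comm.1
    (notMem_Tchain_iff_exists_isRightNeighbor hpT (by linarith) hgen)).symm

lemma integral_V (n : ℕ) : ∫ ω, V n ω ∂P n =
    1 - ∑ i, (μT.prod (P n)).real {q | IsRightNeighbor (vertices q.2) q.1 i} := by
  have hmeas (i : Fin n ⊕ Fin 2) :
      MeasurableSet {q : (ℝ × ℝ) × (Fin n → ℝ × ℝ) | IsRightNeighbor (vertices q.2) q.1 i} :=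
    measurableSet_setOf_isRightNeighbor (measurable_vertices.comp measurable_snd) measurable_fst i
  have hdisj : Pairwise (Function.onFun Disjoint fun i =>
      {q : (ℝ × ℝ) × (Fin n → ℝ × ℝ) | IsRightNeighbor (vertices q.2) q.1 i}) :=
    fun i j hij => Set.disjoint_left.2 fun _ hi hj => hij (hi.unique hj)
  rw [← measureReal_iUnion_fintype hdisj hmeas, ← probReal_compl_eq_one_sub (.iUnion hmeas),
    measureReal_prod_eq_integral_symm (MeasurableSet.iUnion hmeas).compl]
  refine integral_congr_ae ((ae_V_eq n).mono fun ω hω => hω.trans ?_)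
  simp

/-! ### One point and the two corners -/

lemma integral_sub_pow (b : ℝ) (n : ℕ) :
    ∫ y in (0 : ℝ)..b, (b - y) ^ n = b ^ (n + 1) / (n + 1) := by
  rw [intervalIntegral.integral_comp_sub_left (fun y => y ^ n)]
  simp

lemma V_one_eq {ω : Fin 1 → ℝ × ℝ} (hω : ω 0 ∈ T) : V 1 ω = 1 - (ω 0).1 - (ω 0).2 := by
  obtain ⟨-, -, h3⟩ := mem_T.1 hω
  have hchain : Tchain 1 ω = convexHull ℝ {ω 0, (1, 0), (0, 1)} := by
    rw [Tchain, Set.range_unique]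
    rfl
  rw [V, hchain, ← measureReal_def, volume_real_convexHull_triple, orient_corners,
    abs_of_nonneg (by linarith)]
  ring

lemma integral_V_one_pow (k : ℕ) :
    ∫ ω, V 1 ω ^ k ∂P 1 = 2 / (((k : ℝ) + 1) * ((k : ℝ) + 2)) := by
  calc ∫ ω, V 1 ω ^ k ∂P 1 = ∫ ω, (1 - (ω 0).1 - (ω 0).2) ^ k ∂P 1 :=
        integral_congr_ae ((ae_forall_mem_T 1).mono fun ω hω => by simp only [V_one_eq (hω 0)])
    _ = ∫ p, (1 - p.1 - p.2) ^ k ∂μT :=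
        (measurePreserving_funUnique μT (Fin 1)).integral_comp' fun p => (1 - p.1 - p.2) ^ k
    _ = 2 * ∫ x in (0 : ℝ)..1, (1 - x) ^ (k + 1) / ((k : ℝ) + 1) := by
        rw [integral_μT
          ((by fun_prop : Continuous _).continuousOn.integrableOn_compact isCompact_T)]
        simp only [integral_sub_pow, smul_eq_mul]
    _ = 2 / (((k : ℝ) + 1) * ((k : ℝ) + 2)) := by
        rw [intervalIntegral.integral_div, integral_sub_pow]
        push_cast
        field_simp
        ring

lemma measureReal_isRightNeighbor_top (n : ℕ) :
    (μT.prod (P n)).real {q | IsRightNeighbor (vertices q.2) q.1 (.inr 1)} = 0 := by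
  have hT : ∀ᵐ q ∂μT.prod (P n), q.1 ∈ T := Measure.quasiMeasurePreserving_fst.ae ae_mem_T
  refine (measureReal_eq_zero_iff).2 (compl_mem_ae_iff.1 ?_)
  filter_upwards [hT] with q hq hright
  exact (mem_T.1 hq).1.not_gt hright.1

lemma μT_real_setOf_orient_one_zero_pos {p : ℝ × ℝ} (h1 : p.1 < 1) (h2 : 0 < p.2)
    (h3 : p.1 + p.2 ≤ 1) : μT.real {z | 0 < orient p (1, 0) z} = 1 - p.2 / (1 - p.1) := by
  have hpos : 0 < 1 - p.1 := sub_pos.2 h1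
  have hscale (z : ℝ × ℝ) : orient p (1, 0) z =
      (1 - p.1) * (p.2 / (1 - p.1) * z.1 + 1 * z.2 - p.2 / (1 - p.1) * 1) := by
    unfold orient
    field_simp
    ring
  have hle : p.2 / (1 - p.1) ≤ 1 := (div_le_one hpos).2 (by linarith)
  simp only [hscale, mul_pos_iff_of_pos_left hpos, sub_pos]
  rw [μT_real_setOf_lt ⟨div_pos h2 hpos, hle⟩ ⟨one_pos, le_rfl⟩, mul_one]

lemma integrableOn_one_sub_div_pow (n : ℕ) :
    IntegrableOn (fun p : ℝ × ℝ => (1 - p.2 / (1 - p.1)) ^ n) T := by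
  refine .of_bound isCompact_T.measure_lt_top (Measurable.aestronglyMeasurable (by fun_prop)) 1 ?_
  filter_upwards [ae_restrict_mem measurableSet_T] with p hp
  obtain ⟨-, h2, h3⟩ := mem_T.1 hp
  have hdiv : 0 ≤ p.2 / (1 - p.1) := div_nonneg h2 (by linarith)
  have hdiv' : p.2 / (1 - p.1) ≤ 1 := div_le_one_of_le₀ (by linarith) (by linarith)
  rw [norm_pow]
  exact pow_le_one₀ (norm_nonneg _) (abs_le.2 ⟨by linarith, by linarith⟩)

lemma integral_one_sub_div_pow (n : ℕ) :
    ∫ p, (1 - p.2 / (1 - p.1)) ^ n ∂μT = 1 / ((n : ℝ) + 1) := by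
  have hinner (x : ℝ) :
      ∫ y in (0 : ℝ)..(1 - x), (1 - y / (1 - x)) ^ n = (1 - x) / ((n : ℝ) + 1) := by
    rcases eq_or_ne (1 - x) 0 with h | h
    · simp [h]
    · rw [intervalIntegral.integral_comp_div (fun y => (1 - y) ^ n) h, zero_div, div_self h,
        integral_sub_pow]
      simp [div_eq_mul_inv]
  have houter : ∫ x in (0 : ℝ)..1, (1 - x) = 1 / 2 := by
    simpa [one_add_one_eq_two] using integral_sub_pow 1 1
  rw [integral_μT (integrableOn_one_sub_div_pow n)]
  simp only [hinner, intervalIntegral.integral_div, houter, smul_eq_mul]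
  ring

lemma measureReal_isRightNeighbor_corner (n : ℕ) :
    (μT.prod (P n)).real {q | IsRightNeighbor (vertices q.2) q.1 (.inr 0)} =
      1 / ((n : ℝ) + 1) := by
  let C : Set (ℝ × ℝ) := {p | p.1 < 1} ∩ {p | 0 < orient p (1, 0) (0, 1)}
  let S : Set ((ℝ × ℝ) × (ℝ × ℝ)) := {w | 0 < orient w.1 (1, 0) w.2}
  have hC : MeasurableSet C :=
    (measurableSet_lt (by fun_prop) (by fun_prop)).inter
      (measurableSet_lt (by fun_prop) (by fun_prop))
  have hS : MeasurableSet S := measurableSet_lt (by fun_prop) (by fun_prop)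
  have hset : {q : (ℝ × ℝ) × (Fin n → ℝ × ℝ) | IsRightNeighbor (vertices q.2) q.1 (.inr 0)} =
      {q | q.1 ∈ C ∧ ∀ j, (q.1, q.2 j) ∈ S} := by
    ext q
    simp [IsRightNeighbor, vertices, C, S, and_assoc, and_comm]
  have hCae : ∀ᵐ p ∂μT, p ∈ C := by
    filter_upwards [ae_mem_interior_T] with p ⟨_, h2, h3⟩
    refine ⟨show p.1 < 1 by linarith, ?_⟩
    rw [Set.mem_ofPred_eq, orient_corners]
    linarith
  rw [hset, P, measureReal_prod_pi_setOf_forall hC hS, Measure.restrict_eq_self_of_ae_mem hCae,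
    Fintype.card_fin, ← integral_one_sub_div_pow]
  refine integral_congr_ae ?_
  filter_upwards [ae_mem_interior_T] with p ⟨_, h2, h3⟩
  simp only [S, Set.mem_ofPred_eq]
  rw [μT_real_setOf_orient_one_zero_pos (by linarith) h2 h3.le]

/-! ### Pairs of points on a chord -/

/-- The parametrization of pairs of points by chords: the image of `((a, b), (s, r))` is the pair of
points at parameters `s` and `s + r` on the segment from `(0, a)` to `(b, 0)`. -/
def chord (q : (ℝ × ℝ) × (ℝ × ℝ)) : (ℝ × ℝ) × (ℝ × ℝ) :=
  ((q.2.1 * q.1.2, (1 - q.2.1) * q.1.1),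
    ((q.2.1 + q.2.2) * q.1.2, (1 - (q.2.1 + q.2.2)) * q.1.1))

/-- The inverse of `chord`: it recovers the axis intercepts of the line through two points, and the
parameters of the two points on it. -/
def chordInv (w : (ℝ × ℝ) × (ℝ × ℝ)) : (ℝ × ℝ) × (ℝ × ℝ) :=
  let d := w.2.1 * w.1.2 - w.1.1 * w.2.2
  ((d / (w.2.1 - w.1.1), d / (w.1.2 - w.2.2)),
    (w.1.1 * (w.1.2 - w.2.2) / d, (w.2.1 - w.1.1) * (w.1.2 - w.2.2) / d))

/-- The chord parameters `((a, b), (s, r))` that describe pairs of distinct points of `T`, ordered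
from left to right, on a line with both axis intercepts in `(0, 1)`. -/
def chordSource : Set ((ℝ × ℝ) × (ℝ × ℝ)) :=
  (Set.Ioo 0 1 ×ˢ Set.Ioo 0 1) ×ˢ {w ∈ T | 0 < w.2}

/-- The pairs of points of `T`, ordered from left to right, such that both corners `(1, 0)` and
`(0, 1)` lie strictly above the line through them. -/
def chordTarget : Set ((ℝ × ℝ) × (ℝ × ℝ)) :=
  (T ×ˢ T) ∩ {w | w.1.1 < w.2.1 ∧ 0 < orient w.1 w.2 (1, 0) ∧ 0 < orient w.1 w.2 (0, 1)}

lemma measurableSet_chordSource : MeasurableSet chordSource :=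
  (measurableSet_Ioo.prod measurableSet_Ioo).prod
    (measurableSet_T.inter (measurableSet_lt measurable_const measurable_snd))

lemma measurableSet_chordTarget : MeasurableSet chordTarget := by
  simp only [chordTarget, Set.ofPred_and]
  exact (measurableSet_T.prod measurableSet_T).inter
    ((measurableSet_lt (by fun_prop) (by fun_prop)).inter
      ((measurableSet_lt (by fun_prop) (by fun_prop)).inter
        (measurableSet_lt (by fun_prop) (by fun_prop))))

lemma orient_chord (q : (ℝ × ℝ) × (ℝ × ℝ)) (z : ℝ × ℝ) :
    orient (chord q).1 (chord q).2 z =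
      q.2.2 * (q.1.1 * z.1 + q.1.2 * z.2 - q.1.1 * q.1.2) := by
  unfold orient chord; ring

lemma mapsTo_chord : Set.MapsTo chord chordSource chordTarget := by
  rintro ⟨⟨a, b⟩, s, r⟩ ⟨⟨⟨ha0, ha1⟩, hb0, hb1⟩, hT, hr⟩
  obtain ⟨hs, -, hsr⟩ := mem_T.1 hT
  dsimp only at *
  have hmem {t : ℝ} (h0 : 0 ≤ t) (h1 : t ≤ 1) : (t * b, (1 - t) * a) ∈ T := by
    refine mem_T.2 ⟨by positivity, mul_nonneg (sub_nonneg.2 h1) ha0.le, ?_⟩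
    linarith [mul_le_mul_of_nonneg_left hb1.le h0,
      mul_le_mul_of_nonneg_left ha1.le (sub_nonneg.2 h1)]
  refine ⟨⟨hmem hs (by linarith), hmem (by linarith) hsr⟩, ?_, ?_, ?_⟩
  · exact mul_lt_mul_of_pos_right (lt_add_of_pos_right s hr) hb0
  all_goals
    rw [orient_chord]
    refine mul_pos hr ?_
    nlinarith

lemma bounds_of_mem_chordTarget {u v x y : ℝ} (h : ((u, v), (x, y)) ∈ chordTarget) :
    0 < x * v - u * y ∧ x * v - u * y < x - u ∧ x * v - u * y < v - y := by
  obtain ⟨⟨hp, hx⟩, hlt, h10, h01⟩ := h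
  obtain ⟨hu, hv, huv⟩ := mem_T.1 hp
  obtain ⟨-, hy, -⟩ := mem_T.1 hx
  simp only [orient] at *
  have hvx : 0 ≤ v * (x - u) := mul_nonneg hv (sub_pos.2 hlt).le
  have hvy : 0 < v - y := pos_of_mul_pos_left (b := 1 - u) (by linarith) (by linarith)
  have hpos : 0 < v * (x - u) := mul_pos (by linarith) (sub_pos.2 hlt)
  have huy : 0 ≤ u * (v - y) := mul_nonneg hu hvy.le
  exact ⟨by linarith, by linarith, by linarith⟩

lemma mapsTo_chordInv : Set.MapsTo chordInv chordTarget chordSource := by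
  rintro ⟨⟨u, v⟩, x, y⟩ h
  obtain ⟨hd, hdx, hdy⟩ := bounds_of_mem_chordTarget h
  obtain ⟨⟨hp, hx⟩, hlt, -, -⟩ := h
  obtain ⟨hu, -, -⟩ := mem_T.1 hp
  obtain ⟨-, hy, -⟩ := mem_T.1 hx
  have hxu := hd.trans hdx
  have hvy := hd.trans hdy
  have hr : 0 < (x - u) * (v - y) / (x * v - u * y) := by positivity
  refine ⟨⟨⟨div_pos hd hxu, (div_lt_one hxu).2 hdx⟩, div_pos hd hvy, (div_lt_one hvy).2 hdy⟩,
    mem_T.2 ⟨div_nonneg (mul_nonneg hu hvy.le) hd.le, hr.le, ?_⟩, hr⟩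
  dsimp only [chordInv] at *
  rw [← add_div, div_le_one hd]
  linarith [mul_nonneg hy (sub_pos.2 hlt).le]

lemma rightInvOn_chordInv : Set.RightInvOn chordInv chord chordTarget := by
  rintro ⟨⟨u, v⟩, x, y⟩ h
  obtain ⟨hd, hdx, hdy⟩ := bounds_of_mem_chordTarget h
  have hxu : x - u ≠ 0 := (hd.trans hdx).ne'
  have hvy : v - y ≠ 0 := (hd.trans hdy).ne'
  have hd : x * v - u * y ≠ 0 := hd.ne'
  simp only [chord, chordInv, Prod.mk.injEq]
  generalize hdef : x * v - u * y = d at hd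
  refine ⟨⟨?_, ?_⟩, ?_, ?_⟩ <;> field_simp
  · linear_combination -hdef
  · ring
  · linear_combination -hdef

lemma leftInvOn_chordInv : Set.LeftInvOn chordInv chord chordSource := by
  rintro ⟨⟨a, b⟩, s, r⟩ ⟨⟨⟨ha0, -⟩, hb0, -⟩, -, hr⟩
  have ha : a ≠ 0 := ha0.ne'
  have hb : b ≠ 0 := hb0.ne'
  have hr : r ≠ 0 := hr.ne'
  have hd : (s + r) * b * ((1 - s) * a) - s * b * ((1 - (s + r)) * a) = a * b * r := by ring
  have hdx : (s + r) * b - s * b = b * r := by ring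
  have hdy : (1 - s) * a - (1 - (s + r)) * a = a * r := by ring
  simp only [chord, chordInv, hd, hdx, hdy, Prod.mk.injEq]
  refine ⟨⟨?_, ?_⟩, ?_, ?_⟩ <;> field_simp

lemma injOn_chord : Set.InjOn chord chordSource := leftInvOn_chordInv.injOn

lemma image_chord : chord '' chordSource = chordTarget :=
  (Set.BijOn.image_eq
    (Set.InvOn.bijOn ⟨leftInvOn_chordInv, rightInvOn_chordInv⟩ mapsTo_chord mapsTo_chordInv))

/-- The four coordinates of a pair of points, in which the derivative of `chord` is a matrix. -/
@[simps]
def coordEquiv : ((ℝ × ℝ) × (ℝ × ℝ)) ≃ₗ[ℝ] (Fin 4 → ℝ) where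
  toFun w := ![w.1.1, w.1.2, w.2.1, w.2.2]
  invFun c := ((c 0, c 1), (c 2, c 3))
  map_add' := by simp
  map_smul' := by simp
  left_inv _ := rfl
  right_inv c := by ext i; fin_cases i <;> rfl

/-- The Jacobian matrix of `chord` in the coordinates of `coordEquiv`. -/
def chordJacobian (q : (ℝ × ℝ) × (ℝ × ℝ)) : Matrix (Fin 4) (Fin 4) ℝ :=
  !![0, q.2.1, q.1.2, 0;
    1 - q.2.1, 0, -q.1.1, 0;
    0, q.2.1 + q.2.2, q.1.2, q.1.2;
    1 - (q.2.1 + q.2.2), 0, -q.1.1, -q.1.1]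

/-- The derivative of `chord` at `q`. -/
def chordFDeriv (q : (ℝ × ℝ) × (ℝ × ℝ)) :
    (ℝ × ℝ) × (ℝ × ℝ) →L[ℝ] (ℝ × ℝ) × (ℝ × ℝ) :=
  LinearMap.toContinuousLinearMap (coordEquiv.symm.conj (chordJacobian q).toLin')

lemma det_chordJacobian (q : (ℝ × ℝ) × (ℝ × ℝ)) :
    (chordJacobian q).det = -(q.1.1 * q.1.2 * q.2.2) := by
  rw [Matrix.det_succ_row_zero (n := 3) (chordJacobian q), Fin.sum_univ_four]
  simp only [Matrix.det_fin_three, Matrix.submatrix_apply, chordJacobian, Matrix.of_apply,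
    Fin.succAbove, Fin.reduceCastSucc, Fin.reduceSucc, Fin.reduceLT, Fin.isValue, ↓reduceIte,
    Matrix.cons_val, Fin.coe_ofNat_eq_mod]
  ring

lemma hasFDerivAt_chord (q : (ℝ × ℝ) × (ℝ × ℝ)) : HasFDerivAt chord (chordFDeriv q) q := by
  have ha : HasFDerivAt (fun q : (ℝ × ℝ) × (ℝ × ℝ) => q.1.1) _ q :=
    (hasFDerivAt_fst (𝕜 := ℝ) (p := q)).fst
  have hb : HasFDerivAt (fun q : (ℝ × ℝ) × (ℝ × ℝ) => q.1.2) _ q :=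
    (hasFDerivAt_fst (𝕜 := ℝ) (p := q)).snd
  have hs : HasFDerivAt (fun q : (ℝ × ℝ) × (ℝ × ℝ) => q.2.1) _ q :=
    (hasFDerivAt_snd (𝕜 := ℝ) (p := q)).fst
  have hr : HasFDerivAt (fun q : (ℝ × ℝ) × (ℝ × ℝ) => q.2.2) _ q :=
    (hasFDerivAt_snd (𝕜 := ℝ) (p := q)).snd
  refine (((hs.mul hb).prodMk ((hs.const_sub 1).mul ha)).prodMk
    (((hs.add hr).mul hb).prodMk (((hs.add hr).const_sub 1).mul ha))).congr_fderiv ?_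
  ext <;> simp [chordFDeriv, LinearEquiv.conj_apply, chordJacobian, Matrix.vecHead, Matrix.vecTail]

lemma abs_det_chordFDeriv {q : (ℝ × ℝ) × (ℝ × ℝ)} (hq : q ∈ chordSource) :
    |(chordFDeriv q).det| = q.1.1 * q.1.2 * q.2.2 := by
  obtain ⟨⟨⟨ha, -⟩, hb, -⟩, -, hr⟩ := hq
  rw [chordFDeriv, LinearMap.det_toContinuousLinearMap, LinearEquiv.conj_apply,
    LinearMap.comp_assoc, LinearMap.det_conj, LinearMap.det_toLin', det_chordJacobian, abs_neg,
    abs_of_nonneg (by positivity)]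

/-! ### Random points as right neighbours -/

lemma integral_one_sub_mul_pow (a : ℝ) (n : ℕ) :
    ∫ b in (0 : ℝ)..1, (1 - a * b) ^ n =
      (∑ i ∈ Finset.range (n + 1), (1 - a) ^ i) / ((n : ℝ) + 1) := by
  rcases eq_or_ne a 0 with rfl | ha
  · simp [div_self (Nat.cast_add_one_ne_zero (R := ℝ) n)]
  · rw [intervalIntegral.integral_comp_sub_mul (fun b => b ^ n) ha]
    simp only [mul_zero, mul_one, sub_zero, integral_pow, one_pow, smul_eq_mul]
    have hgeom := geom_sum_mul (1 - a) (n + 1)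
    field_simp
    linear_combination hgeom

lemma integral_integral_one_sub_mul_pow (n : ℕ) :
    ∫ a in (0 : ℝ)..1, ∫ b in (0 : ℝ)..1, (1 - a * b) ^ n = H (n + 1) / ((n : ℝ) + 1) := by
  simp only [integral_one_sub_mul_pow, intervalIntegral.integral_div]
  rw [intervalIntegral.integral_finsetSum fun i _ =>
    Continuous.intervalIntegrable (by fun_prop) ..]
  simp only [integral_sub_pow, one_pow, H]

lemma setIntegral_Ioo_prod_Ioo {f : ℝ × ℝ → ℝ} (hf : Continuous f) :
    ∫ w in Set.Ioo 0 1 ×ˢ Set.Ioo 0 1, f w = ∫ a in (0 : ℝ)..1, ∫ b in (0 : ℝ)..1, f (a, b) := by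
  have hint : IntegrableOn f (Set.Ioo 0 1 ×ˢ Set.Ioo 0 1) :=
    (hf.continuousOn.integrableOn_compact (isCompact_Icc.prod isCompact_Icc)).mono_set
      (Set.prod_mono Set.Ioo_subset_Icc_self Set.Ioo_subset_Icc_self)
  rw [Measure.volume_eq_prod, setIntegral_prod _ hint]
  simp only [intervalIntegral.integral_of_le zero_le_one, integral_Ioc_eq_integral_Ioo]

lemma setIntegral_mul_mul_one_sub_mul_pow (n : ℕ) :
    ((n : ℝ) + 1) * ∫ w in Set.Ioo (0 : ℝ) 1 ×ˢ Set.Ioo (0 : ℝ) 1,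
      w.1 * w.2 * (1 - w.1 * w.2) ^ n = (H (n + 2) - 1) / ((n : ℝ) + 2) := by
  have hdiff (a b : ℝ) : a * b * (1 - a * b) ^ n = (1 - a * b) ^ n - (1 - a * b) ^ (n + 1) := by
    ring
  have hH : H (n + 2) = H (n + 1) + 1 / ((n : ℝ) + 2) := by
    rw [H, Finset.sum_range_succ, ← H]
    push_cast
    ring
  have hcont (k : ℕ) : Continuous fun a : ℝ => ∫ b in (0 : ℝ)..1, (1 - a * b) ^ k := by
    simp only [integral_one_sub_mul_pow]
    fun_prop
  rw [setIntegral_Ioo_prod_Ioo (by fun_prop)]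
  simp only [hdiff]
  calc _ = ((n : ℝ) + 1) * ∫ a in (0 : ℝ)..1,
        ((∫ b in (0 : ℝ)..1, (1 - a * b) ^ n) - ∫ b in (0 : ℝ)..1, (1 - a * b) ^ (n + 1)) := by
        congr! 3 with a
        exact intervalIntegral.integral_sub (Continuous.intervalIntegrable (by fun_prop) ..)
          (Continuous.intervalIntegrable (by fun_prop) ..)
    _ = (n + 1) * (H (n + 1) / (n + 1) - H (n + 2) / (n + 2)) := by
        rw [intervalIntegral.integral_sub ((hcont _).intervalIntegrable ..)
          ((hcont _).intervalIntegrable ..), integral_integral_one_sub_mul_pow,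
          integral_integral_one_sub_mul_pow]
        push_cast
        ring
    _ = (H (n + 2) - 1) / (n + 2) := by
        rw [hH]
        field_simp
        ring

lemma setIntegral_snd_sep_T : ∫ w in {w ∈ T | 0 < w.2}, w.2 = (1 / 6 : ℝ) := by
  calc ∫ w in {w ∈ T | 0 < w.2}, w.2 = ∫ w in T, w.2 := by
        refine (setIntegral_eq_of_subset_of_forall_sdiff_eq_zero measurableSet_T
          (Set.sep_subset _ _) fun w hw => ?_).symm
        exact le_antisymm (not_lt.1 fun h => hw.2 ⟨hw.1, h⟩) (mem_T.1 hw.1).2.1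
    _ = ∫ x in (0 : ℝ)..1, ∫ y in (0 : ℝ)..(1 - x), y :=
        setIntegral_T (continuous_snd.continuousOn.integrableOn_compact isCompact_T)
    _ = ∫ x in (0 : ℝ)..1, (1 - x) ^ 2 / 2 := by simp
    _ = 1 / 6 := by
        rw [intervalIntegral.integral_div, integral_sub_pow]
        norm_num

lemma setIntegral_chordTarget_prod (f : (ℝ × ℝ) × (ℝ × ℝ) → ℝ) :
    ∫ w in chordTarget, f w ∂μT.prod μT = 4 * ∫ w in chordTarget, f w := by
  have hsub : chordTarget ⊆ T ×ˢ T := Set.inter_subset_left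
  have hprod : (μT.prod μT).restrict chordTarget = (4 : ENNReal) • volume.restrict chordTarget := by
    rw [μT, Measure.prod_smul_left, Measure.prod_smul_right, Measure.prod_restrict, smul_smul,
      Measure.restrict_smul, Measure.restrict_restrict_of_subset hsub]
    simp only [Measure.volume_eq_prod]
    norm_num
  rw [hprod, integral_smul_measure]
  simp

lemma μT_real_setOf_orient_chord_pos {q : (ℝ × ℝ) × (ℝ × ℝ)} (hq : q ∈ chordSource) :
    μT.real {z | 0 < orient (chord q).1 (chord q).2 z} = 1 - q.1.1 * q.1.2 := by
  obtain ⟨⟨ha, hb⟩, -, hr⟩ := hq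
  have hr : 0 < q.2.2 := hr
  simp only [orient_chord, mul_pos_iff_of_pos_left hr, sub_pos]
  exact μT_real_setOf_lt (Set.Ioo_subset_Ioc_self ha) (Set.Ioo_subset_Ioc_self hb)

lemma setIntegral_chordTarget_pow (m : ℕ) :
    ((m : ℝ) + 1) * ∫ w in chordTarget, μT.real {z | 0 < orient w.1 w.2 z} ^ m =
      (H (m + 2) - 1) / ((m : ℝ) + 2) / 6 := by
  have : (volume : Measure ((ℝ × ℝ) × (ℝ × ℝ))).IsAddHaarMeasure :=
    Measure.prod.instIsAddHaarMeasure _ _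
  calc _ = (m + 1) * ∫ q in chordSource,
        q.1.1 * q.1.2 * (1 - q.1.1 * q.1.2) ^ m * q.2.2 := by
        rw [← image_chord, integral_image_eq_integral_abs_det_fderiv_smul volume
          measurableSet_chordSource (fun q _ => (hasFDerivAt_chord q).hasFDerivWithinAt)
          injOn_chord]
        congr 1
        refine setIntegral_congr_fun measurableSet_chordSource fun q hq => ?_
        simp only [abs_det_chordFDeriv hq, μT_real_setOf_orient_chord_pos hq, smul_eq_mul]
        ring
    _ = (m + 1) * ((∫ w in Set.Ioo (0 : ℝ) 1 ×ˢ Set.Ioo (0 : ℝ) 1,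
          w.1 * w.2 * (1 - w.1 * w.2) ^ m) * ∫ w in {w ∈ T | 0 < w.2}, w.2) := by
        rw [Measure.volume_eq_prod (ℝ × ℝ), chordSource,
          setIntegral_prod_mul (fun w : ℝ × ℝ => w.1 * w.2 * (1 - w.1 * w.2) ^ m)
            (fun w : ℝ × ℝ => w.2)]
    _ = _ := by
        rw [← mul_assoc, setIntegral_mul_mul_one_sub_mul_pow, setIntegral_snd_sep_T, mul_one_div]

lemma measureReal_isRightNeighbor_point {m : ℕ} (i : Fin (m + 1)) :
    (μT.prod (P (m + 1))).real {q | IsRightNeighbor (vertices q.2) q.1 (.inl i)} =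
      4 * ∫ w in chordTarget, μT.real {z | 0 < orient w.1 w.2 z} ^ m := by
  let S : Set (((ℝ × ℝ) × (ℝ × ℝ)) × (ℝ × ℝ)) := {w | 0 < orient w.1.1 w.1.2 w.2}
  have hS : MeasurableSet S := measurableSet_lt (by fun_prop) (by fun_prop)
  refine (measureReal_congr ?_).trans
    ((measureReal_prod_pi_setOf_forall_ne i measurableSet_chordTarget hS).trans
      (setIntegral_chordTarget_prod _))
  filter_upwards [Measure.quasiMeasurePreserving_fst.ae ae_mem_T,
    Measure.quasiMeasurePreserving_snd.ae (ae_forall_mem_T (m + 1))] with q hp hω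
  refine propext ?_
  change IsRightNeighbor _ _ _ ↔ (q.1, q.2 i) ∈ chordTarget ∧ _
  simp only [IsRightNeighbor, chordTarget, vertices, S, Sum.elim_inl, Sum.elim_inr, Sum.forall,
    Fin.forall_fin_two, ne_eq, Sum.inl.injEq, reduceCtorEq, not_false_eq_true, forall_const,
    Matrix.cons_val_zero, Matrix.cons_val_one, Set.mem_inter_iff, Set.mem_prod, Set.mem_ofPred_eq,
    hp, hω i, true_and, and_true]
  tauto

lemma sum_measureReal_isRightNeighbor_point (n : ℕ) :
    ∑ i, (μT.prod (P n)).real {q | IsRightNeighbor (vertices q.2) q.1 (.inl i)} =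
      2 / 3 * (H (n + 1) - 1) / ((n : ℝ) + 1) := by
  cases n with
  | zero => simp [H]
  | succ m =>
    simp only [measureReal_isRightNeighbor_point, Finset.sum_const, Finset.card_univ,
      Fintype.card_fin, nsmul_eq_mul]
    push_cast
    linear_combination 4 * setIntegral_chordTarget_pow m

lemma integral_V_eq (n : ℕ) :
    ∫ ω, V n ω ∂P n = (n + 2 / 3 - 2 / 3 * H (n + 1)) / ((n : ℝ) + 1) := by
  rw [integral_V, Fintype.sum_sum_type, Fin.sum_univ_two, sum_measureReal_isRightNeighbor_point,
    measureReal_isRightNeighbor_corner, measureReal_isRightNeighbor_top]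
  field_simp
  ring

/-- `q_{n,1} = n + 2/3 - (2/3) H_{n+1}` and `q_{1,k} = 2/(k+2)`. -/
theorem stmt3 (n k : ℕ) :
    (q n 1 = (n : ℝ) + 2 / 3 - 2 / 3 * H (n + 1)) ∧
    (q 1 k = 2 / ((k : ℝ) + 2)) := by
  constructor
  · simp only [q, pow_one, integral_V_eq, Nat.choose_one_right]
    push_cast
    field_simp
  · rw [q, integral_V_one_pow, add_comm 1 k, Nat.choose_succ_self_right]
    push_cast
    field_simp

end
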